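/- Let Γ be a Shilla distance-regular graph with b = b(Γ). Then -b² < θ₃ < -b, where θ₃ is the smallest eigenvalue of Γ. -/

import Mathlib

open Finset SimpleGraph

/-- `G` is a distance-regular graph with diameter `D` and intersection numbers
`b i`, `c i`, `a i` (so valency `k = b 0` and `a i = k - b i - c i`). -/
structure IsDRG {V : Type*} [Fintype V] (G : SimpleGraph V) (D : ℕ)
    (b c a : ℕ → ℕ) : Prop where
  connected : G.Connected
  le_diam : ∀ x y : V, G.dist x y ≤ D
  exists_diam : ∃ x y : V, G.dist x y = D
  card_b : ∀ i, i ≤ D → ∀ x y : V, G.dist x y = i →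
      Nat.card {z : V | G.Adj y z ∧ G.dist x z = i + 1} = b i
  card_c : ∀ i, i ≤ D → ∀ x y : V, G.dist x y = i →
      Nat.card {z : V | G.Adj y z ∧ G.dist x z = i - 1} = c i
  card_a : ∀ i, i ≤ D → ∀ x y : V, G.dist x y = i →
      Nat.card {z : V | G.Adj y z ∧ G.dist x z = i} = a i

/-- `θ` is an eigenvalue of the adjacency matrix of `G`. -/
def IsEig {V : Type*} [Fintype V] [DecidableEq V] (G : SimpleGraph V)
    [DecidableRel G.Adj] (θ : ℝ) : Prop :=
  ∃ v : V → ℝ, v ≠ 0 ∧ (G.adjMatrix ℝ).mulVec v = θ • v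

/-- `θ` is the second largest eigenvalue of `G` (`k` being the largest). -/
def IsSecondLargestEig {V : Type*} [Fintype V] [DecidableEq V] (G : SimpleGraph V)
    [DecidableRel G.Adj] (k θ : ℝ) : Prop :=
  IsEig G θ ∧ θ < k ∧ ∀ η : ℝ, IsEig G η → η ≠ k → η ≤ θ

/-- `θ` is the smallest eigenvalue of `G`. -/
def IsSmallestEig {V : Type*} [Fintype V] [DecidableEq V] (G : SimpleGraph V)
    [DecidableRel G.Adj] (θ : ℝ) : Prop :=
  IsEig G θ ∧ ∀ η : ℝ, IsEig G η → θ ≤ η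

/-- The multiplicity of `θ` as an eigenvalue of the adjacency matrix of `G`. -/
noncomputable def eigMult {V : Type*} [Fintype V] [DecidableEq V] (G : SimpleGraph V)
    [DecidableRel G.Adj] (θ : ℝ) : ℕ :=
  Module.finrank ℝ ↥(Module.End.eigenspace (Matrix.toLin' (G.adjMatrix ℝ)) θ)

/-- A Shilla distance-regular graph: diameter `3` and second largest eigenvalue `a 3`. -/
structure IsShilla {V : Type*} [Fintype V] [DecidableEq V] (G : SimpleGraph V)
    [DecidableRel G.Adj] (b c a : ℕ → ℕ) : Prop where
  drg : IsDRG G 3 b c a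
  second : IsSecondLargestEig G (b 0) ((a 3 : ℝ))

/-!
For an eigenvector `v` of a distance-regular graph with eigenvalue `θ`, the average of `v` over the
sphere of radius `i` around `x` is `uᵢ v(x)`, where `u` is the cosine sequence of `θ`. Hence the
matrix with entries `u (d(x, y))` is a multiple of its own square, so it is positive semidefinite.

In a Shilla graph, with `β = a₃ - a₁`, the cosine sequence of the eigenvalue `a₃` has `u₂ = 0`,
which gives `k = a₃ β` and `u = (1, 1 / β, 0, -c₂ / (b₂ β))`.

Upper bound: `-β` is then a root of `μ² = a₁ μ + k`, so it is an eigenvalue of the subgraph induced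
on `{x} ∪ Γ(x)`, and interlacing gives `θ₃ ≤ -β`. Equality would make the eigenvector, extended by
zero, an eigenvector of the whole graph, which it is not: its image is nonzero at distance `2` from
`x`.

Lower bound: with `w` the cosine sequence of `θ₃`, the Krein condition `∑ kᵢ uᵢ² wᵢ ≥ 0` amounts to
`b₂ (θ₃ + β²) + c₂ (θ₃ + β) ≥ 0`, and `θ₃ + β < 0` forces `θ₃ > -β²`.
-/

open scoped BigOperators Matrix

section

variable {V : Type*}

/-- The adjacency operator on functions of the distance to a base vertex: the tridiagonal
intersection matrix of a distance-regular graph. At `i = 0` the truncated index `i - 1` is harmless,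
since then `c 0 = 0`. -/
def intersectionOp (b c a : ℕ → ℕ) (f : ℕ → ℝ) (i : ℕ) : ℝ :=
  c i * f (i - 1) + a i * f i + b i * f (i + 1)

/-- The standard (or cosine) sequence `u` of `θ`: the eigenvector of the intersection matrix
normalized by `u 0 = 1`. Only the terms `u 0, …, u D` matter. -/
structure IsCosineSeq (D : ℕ) (b c a : ℕ → ℕ) (θ : ℝ) (u : ℕ → ℝ) : Prop where
  zero : u 0 = 1
  intersectionOp_eq : ∀ i ≤ D, intersectionOp b c a u i = θ * u i

/-- The valency `kᵢ` of the distance-`i` graph: the number of vertices at distance `i` from any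
given vertex, in the closed form `b₀ ⋯ bᵢ₋₁ / (c₁ ⋯ cᵢ)`. -/
noncomputable def distValency (b c : ℕ → ℕ) (i : ℕ) : ℝ :=
  ∏ j ∈ range i, (b j / c (j + 1) : ℝ)

theorem intersectionOp_div (b c a : ℕ → ℕ) (f : ℕ → ℝ) (r : ℝ) (i : ℕ) :
    intersectionOp b c a (fun j => f j / r) i = intersectionOp b c a f i / r := by
  simp only [intersectionOp]
  ring

/-- The matrix whose `(x, y)` entry is `f (d(x, y))`, an element of the Bose–Mesner algebra when the
graph is distance-regular. -/
noncomputable def radialMatrix (G : SimpleGraph V) (f : ℕ → ℝ) : Matrix V V ℝ :=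
  .of fun x y => f (G.dist x y)

theorem radialMatrix_isHermitian (G : SimpleGraph V) (f : ℕ → ℝ) :
    (radialMatrix G f).IsHermitian := by
  ext x y
  simp [radialMatrix, SimpleGraph.dist_comm]

variable [Fintype V]

/-- The average of `v` over the sphere of radius `i` around `x`. -/
noncomputable def sphereAvg (G : SimpleGraph V) (x : V) (v : V → ℝ) (i : ℕ) : ℝ :=
  𝔼 y with G.dist x y = i, v y

theorem filter_dist_eq_zero {G : SimpleGraph V} (hG : G.Connected) (x : V) :
    ({y | G.dist x y = 0} : Finset V) = {x} := by
  ext y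
  simp only [mem_filter_univ, mem_singleton, hG.dist_eq_zero_iff, eq_comm]

theorem sphereAvg_zero {G : SimpleGraph V} (hG : G.Connected) (x : V) (v : V → ℝ) :
    sphereAvg G x v 0 = v x := by
  rw [sphereAvg, filter_dist_eq_zero hG, expect_singleton]

theorem sphereAvg_smul (G : SimpleGraph V) (x : V) (r : ℝ) (v : V → ℝ) :
    sphereAvg G x (r • v) = r • sphereAvg G x v := by
  ext i
  simp only [sphereAvg, Pi.smul_apply, smul_eq_mul, mul_expect]

theorem sum_dist_mul_sphereAvg (G : SimpleGraph V) (x : V) (f : ℕ → ℝ) (v : V → ℝ) :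
    ∑ y, f (G.dist x y) * sphereAvg G x v (G.dist x y) = ∑ y, f (G.dist x y) * v y := by
  classical
  have hmaps : ∀ y ∈ univ, G.dist x y ∈ univ.image (G.dist x) := fun y hy => mem_image_of_mem _ hy
  rw [← sum_fiberwise_of_maps_to hmaps, ← sum_fiberwise_of_maps_to hmaps]
  refine sum_congr rfl fun i _ => ?_
  calc ∑ y with G.dist x y = i, f (G.dist x y) * sphereAvg G x v (G.dist x y)
      = ∑ y with G.dist x y = i, f i * sphereAvg G x v i :=
        sum_congr rfl fun y hy => by rw [(mem_filter.mp hy).2]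
    _ = f i * ∑ y with G.dist x y = i, v y := by
        rw [sum_const, nsmul_eq_mul, mul_left_comm, sphereAvg, card_mul_expect]
    _ = ∑ y with G.dist x y = i, f (G.dist x y) * v y := by
        rw [mul_sum]
        exact sum_congr rfl fun y hy => by rw [(mem_filter.mp hy).2]

namespace IsDRG

variable {G : SimpleGraph V} {D : ℕ} {b c a : ℕ → ℕ}

theorem exists_adj_dist_eq (h : IsDRG G D b c a) {i : ℕ} (hi : i < D) :
    ∃ x y z, G.Adj y z ∧ G.dist x y = i ∧ G.dist x z = i + 1 := by
  obtain ⟨x, y, hxy⟩ := h.exists_diam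
  obtain ⟨p, hp⟩ := h.connected.exists_walk_length_eq_dist x y
  have hdist : ∀ j ≤ D, G.dist x (p.getVert j) = j := fun j hj => by
    have hstart := SimpleGraph.dist_le (p.take j)
    have hend := SimpleGraph.dist_le (p.drop j)
    have htri := h.connected.dist_triangle (u := x) (v := p.getVert j) (w := y)
    rw [p.take_length] at hstart
    rw [p.drop_length] at hend
    omega
  exact ⟨x, p.getVert i, p.getVert (i + 1), p.adj_getVert_succ (by omega), hdist i hi.le,
    hdist (i + 1) hi⟩

theorem b_pos (h : IsDRG G D b c a) {i : ℕ} (hi : i < D) : (0 : ℝ) < b i := by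
  obtain ⟨x, y, z, hyz, hy, hz⟩ := h.exists_adj_dist_eq hi
  rw [← h.card_b i hi.le x y hy, Nat.cast_pos]
  have : Nonempty {z : V | G.Adj y z ∧ G.dist x z = i + 1} := ⟨⟨z, hyz, hz⟩⟩
  exact Nat.card_pos

theorem c_pos (h : IsDRG G D b c a) {i : ℕ} (hi : i < D) : (0 : ℝ) < c (i + 1) := by
  obtain ⟨x, y, z, hyz, hy, hz⟩ := h.exists_adj_dist_eq hi
  rw [← h.card_c (i + 1) hi x z hz, Nat.cast_pos]
  have : Nonempty {w : V | G.Adj z w ∧ G.dist x w = i + 1 - 1} := ⟨⟨y, hyz.symm, hy⟩⟩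
  exact Nat.card_pos

theorem c_zero (h : IsDRG G D b c a) : c 0 = 0 := by
  obtain ⟨x, -⟩ := h.exists_diam
  rw [← h.card_c 0 D.zero_le x x SimpleGraph.dist_self, Nat.card_eq_zero]
  refine .inl ⟨fun z => z.2.1.ne ?_⟩
  exact h.connected.dist_eq_zero_iff.mp z.2.2

theorem a_zero (h : IsDRG G D b c a) : a 0 = 0 := by
  obtain ⟨x, -⟩ := h.exists_diam
  rw [← h.card_a 0 D.zero_le x x SimpleGraph.dist_self, Nat.card_eq_zero]
  refine .inl ⟨fun z => z.2.1.ne ?_⟩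
  exact h.connected.dist_eq_zero_iff.mp z.2.2

theorem c_one (h : IsDRG G D b c a) (hD : 0 < D) : c 1 = 1 := by
  obtain ⟨x, y, z, hyz, hy, hz⟩ := h.exists_adj_dist_eq hD
  obtain rfl := h.connected.dist_eq_zero_iff.mp hy
  rw [← h.card_c 1 hD x z hz, Nat.card_eq_one_iff_exists]
  exact ⟨⟨x, hyz.symm, hy⟩, fun w => Subtype.ext (h.connected.dist_eq_zero_iff.mp w.2.2).symm⟩

theorem card_sphere (h : IsDRG G D b c a) (x : V) {i : ℕ} (hi : i ≤ D) :
    (#{y | G.dist x y = i} : ℝ) = distValency b c i := by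
  classical
  induction i with
  | zero =>
    rw [filter_dist_eq_zero h.connected, card_singleton, Nat.cast_one, distValency, prod_range_zero]
  | succ i ih =>
    have hcount : #{y | G.dist x y = i} * b i = #{z | G.dist x z = i + 1} * c (i + 1) := by
      refine card_mul_eq_card_mul G.Adj (fun y hy => ?_) fun z hz => ?_
      · rw [← h.card_b i (by omega) x y (mem_filter.mp hy).2]
        exact (Nat.subtype_card _ fun z => by simp [bipartiteAbove, and_comm]).symm
      · rw [← h.card_c (i + 1) hi x z (mem_filter.mp hz).2]
        exact (Nat.subtype_card _ fun y => by simp [bipartiteBelow, and_comm, G.adj_comm]).symm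
    rw [distValency, prod_range_succ, ← distValency, ← ih (by omega), ← mul_div_assoc,
      eq_div_iff (h.c_pos hi).ne']
    exact_mod_cast hcount.symm

theorem distValency_pos (h : IsDRG G D b c a) {i : ℕ} (hi : i ≤ D) : 0 < distValency b c i :=
  prod_pos fun j hj => by
    have hj : j < D := (mem_range.mp hj).trans_le hi
    exact div_pos (h.b_pos hj) (h.c_pos hj)

theorem sum_dist (h : IsDRG G D b c a) (x : V) (f : ℕ → ℝ) :
    ∑ y, f (G.dist x y) = ∑ i ∈ range (D + 1), distValency b c i * f i := by
  have hmaps : ∀ y ∈ univ, G.dist x y ∈ range (D + 1) := fun y _ =>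
    mem_range.mpr (Nat.lt_succ_of_le (h.le_diam x y))
  rw [← sum_fiberwise_of_maps_to hmaps]
  refine sum_congr rfl fun i hi => ?_
  rw [sum_congr rfl fun y hy => by rw [(mem_filter.mp hy).2], sum_const, nsmul_eq_mul,
    h.card_sphere x (Nat.lt_succ_iff.mp (mem_range.mp hi))]

section Adjacency

variable [DecidableRel G.Adj]

theorem adjMatrix_mulVec_dist (h : IsDRG G D b c a) (x : V) (f : ℕ → ℝ) :
    (G.adjMatrix ℝ *ᵥ fun y => f (G.dist x y)) =
      fun y => intersectionOp b c a f (G.dist x y) := by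
  ext y
  have hcard : ∀ j, #{z ∈ G.neighborFinset y | G.dist x z = j} =
      Nat.card {z : V | G.Adj y z ∧ G.dist x z = j} := fun j =>
    (Nat.subtype_card _ fun z => by simp).symm
  have hsplit : ∀ z ∈ G.neighborFinset y, f (G.dist x z) =
      (if G.dist x z = G.dist x y - 1 then f (G.dist x y - 1) else 0) +
      (if G.dist x z = G.dist x y then f (G.dist x y) else 0) +
      (if G.dist x z = G.dist x y + 1 then f (G.dist x y + 1) else 0) := fun z hz => by
    have hadj : G.Adj y z := (G.mem_neighborFinset y z).mp hz
    have hzero : G.dist x y = 0 → G.dist x z ≠ 0 := fun hy hz => hadj.ne <|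
      (h.connected.dist_eq_zero_iff.mp hy).symm.trans (h.connected.dist_eq_zero_iff.mp hz)
    have hstep := hadj.diff_dist_adj (u := x)
    grind
  rw [SimpleGraph.adjMatrix_mulVec_apply, sum_congr rfl hsplit]
  simp only [sum_add_distrib, ← sum_filter, sum_const, nsmul_eq_mul, hcard, intersectionOp]
  rw [h.card_b _ (h.le_diam x y) x y rfl, h.card_c _ (h.le_diam x y) x y rfl,
    h.card_a _ (h.le_diam x y) x y rfl]

theorem sum_dist_mul_adjMatrix_mulVec (h : IsDRG G D b c a) (x : V) (f : ℕ → ℝ) (v : V → ℝ) :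
    ∑ y, f (G.dist x y) * (G.adjMatrix ℝ *ᵥ v) y =
      ∑ y, intersectionOp b c a f (G.dist x y) * v y := by
  change (fun y => f (G.dist x y)) ⬝ᵥ (G.adjMatrix ℝ *ᵥ v) = _
  rw [Matrix.dotProduct_mulVec, ← Matrix.mulVec_transpose, G.transpose_adjMatrix,
    h.adjMatrix_mulVec_dist x f]
  rfl

/-- Tested against functions of the distance to `x`, which the adjacency matrix preserves, `v` and
its spherical average have the same sums. -/
theorem intersectionOp_sphereAvg (h : IsDRG G D b c a) (x : V) (v : V → ℝ) {i : ℕ} (hi : i ≤ D) :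
    intersectionOp b c a (sphereAvg G x v) i = sphereAvg G x (G.adjMatrix ℝ *ᵥ v) i := by
  let δ : ℕ → ℝ := fun j => if j = i then 1 else 0
  have hsum : ∑ y, δ (G.dist x y) * intersectionOp b c a (sphereAvg G x v) (G.dist x y) =
      ∑ y, δ (G.dist x y) * sphereAvg G x (G.adjMatrix ℝ *ᵥ v) (G.dist x y) :=
    calc ∑ y, δ (G.dist x y) * intersectionOp b c a (sphereAvg G x v) (G.dist x y)
        = ∑ y, δ (G.dist x y) * (G.adjMatrix ℝ *ᵥ fun z => sphereAvg G x v (G.dist x z)) y := by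
          rw [h.adjMatrix_mulVec_dist x]
      _ = ∑ y, intersectionOp b c a δ (G.dist x y) * sphereAvg G x v (G.dist x y) :=
          h.sum_dist_mul_adjMatrix_mulVec x δ _
      _ = ∑ y, intersectionOp b c a δ (G.dist x y) * v y := sum_dist_mul_sphereAvg G x _ v
      _ = ∑ y, δ (G.dist x y) * (G.adjMatrix ℝ *ᵥ v) y :=
          (h.sum_dist_mul_adjMatrix_mulVec x δ v).symm
      _ = ∑ y, δ (G.dist x y) * sphereAvg G x (G.adjMatrix ℝ *ᵥ v) (G.dist x y) :=
          (sum_dist_mul_sphereAvg G x δ _).symm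
  rw [h.sum_dist x fun j => δ j * _, h.sum_dist x fun j => δ j * _] at hsum
  simpa [δ, Nat.lt_succ_of_le hi, (h.distValency_pos hi).ne'] using hsum

theorem exists_isCosineSeq [DecidableEq V] (h : IsDRG G D b c a) {θ : ℝ} (hθ : IsEig G θ) :
    ∃ u, IsCosineSeq D b c a θ u := by
  obtain ⟨v, hv, hAv⟩ := hθ
  obtain ⟨x, hx⟩ := Function.ne_iff.mp hv
  refine ⟨fun i => sphereAvg G x v i / v x, ?_, fun i hi => ?_⟩
  · rw [sphereAvg_zero h.connected]
    exact div_self hx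
  · rw [intersectionOp_div, h.intersectionOp_sphereAvg x v hi, hAv, sphereAvg_smul, Pi.smul_apply,
      smul_eq_mul, mul_div_assoc]

end Adjacency

theorem eq_mul_cosineSeq (h : IsDRG G D b c a) {θ : ℝ} {u f : ℕ → ℝ} (hu : IsCosineSeq D b c a θ u)
    (hf : ∀ i ≤ D, intersectionOp b c a f i = θ * f i) {i : ℕ} (hi : i ≤ D) :
    f i = f 0 * u i := by
  induction i using Nat.strong_induction_on with
  | _ i ih =>
    cases i with
    | zero => rw [hu.zero, mul_one]
    | succ i =>
      have hfi := hf i (by omega)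
      have hui := hu.intersectionOp_eq i (by omega)
      rw [intersectionOp, ih (i - 1) (by omega) (by omega), ih i (by omega) (by omega)] at hfi
      rw [intersectionOp] at hui
      apply mul_left_cancel₀ (h.b_pos hi).ne'
      linear_combination hfi - f 0 * hui

theorem sum_dist_mul_eigenvector [DecidableRel G.Adj] (h : IsDRG G D b c a) {θ : ℝ} {u : ℕ → ℝ}
    (hu : IsCosineSeq D b c a θ u) {v : V → ℝ} (hv : G.adjMatrix ℝ *ᵥ v = θ • v) (x : V)
    (f : ℕ → ℝ) :
    ∑ y, f (G.dist x y) * v y = (∑ i ∈ range (D + 1), distValency b c i * (f i * u i)) * v x := by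
  have havg : ∀ i ≤ D, sphereAvg G x v i = v x * u i := fun i hi => by
    rw [← sphereAvg_zero h.connected x v]
    refine h.eq_mul_cosineSeq hu (fun j hj => ?_) hi
    rw [h.intersectionOp_sphereAvg x v hj, hv, sphereAvg_smul, Pi.smul_apply, smul_eq_mul]
  calc ∑ y, f (G.dist x y) * v y
      = ∑ y, f (G.dist x y) * sphereAvg G x v (G.dist x y) :=
        (sum_dist_mul_sphereAvg G x f v).symm
    _ = ∑ y, f (G.dist x y) * u (G.dist x y) * v x :=
        sum_congr rfl fun y _ => by rw [havg _ (h.le_diam x y)]; ring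
    _ = (∑ i ∈ range (D + 1), distValency b c i * (f i * u i)) * v x := by
        rw [← sum_mul, h.sum_dist x fun i => f i * u i]

theorem radialMatrix_mul_self (h : IsDRG G D b c a) {θ : ℝ} {u : ℕ → ℝ}
    (hu : IsCosineSeq D b c a θ u) :
    radialMatrix G u * radialMatrix G u =
      (∑ i ∈ range (D + 1), distValency b c i * (u i * u i)) • radialMatrix G u := by
  classical
  ext x z
  have heig : (G.adjMatrix ℝ *ᵥ fun y => u (G.dist z y)) = θ • fun y => u (G.dist z y) := by
    rw [h.adjMatrix_mulVec_dist z u]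
    ext y
    exact hu.intersectionOp_eq _ (h.le_diam z y)
  simpa [Matrix.mul_apply, radialMatrix, G.dist_comm (u := z)] using
    h.sum_dist_mul_eigenvector hu heig x u

theorem radialMatrix_posSemidef (h : IsDRG G D b c a) {θ : ℝ} {u : ℕ → ℝ}
    (hu : IsCosineSeq D b c a θ u) : (radialMatrix G u).PosSemidef := by
  set γ := ∑ i ∈ range (D + 1), distValency b c i * (u i * u i)
  have hγ : 0 < γ := sum_pos' (fun i hi => mul_nonneg
    (h.distValency_pos (Nat.lt_succ_iff.mp (mem_range.mp hi))).le (mul_self_nonneg _))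
    ⟨0, by simp, by simp [hu.zero, h.distValency_pos D.zero_le]⟩
  have hsq : (radialMatrix G u * radialMatrix G u).PosSemidef := by
    simpa only [(radialMatrix_isHermitian G u).eq] using
      Matrix.posSemidef_conjTranspose_mul_self (radialMatrix G u)
  have hscale : radialMatrix G u = γ⁻¹ • (radialMatrix G u * radialMatrix G u) := by
    rw [h.radialMatrix_mul_self hu, inv_smul_smul₀ hγ.ne']
  rw [hscale]
  exact hsq.smul (inv_nonneg.mpr hγ.le)

/-- By the Schur product theorem the entrywise product of the three radial matrices is positive
semidefinite; the sum is the quadratic form of this product at the all-ones vector, up to `|V|`. -/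
theorem krein_nonneg (h : IsDRG G D b c a) {θ η ζ : ℝ} {u v w : ℕ → ℝ}
    (hu : IsCosineSeq D b c a θ u) (hv : IsCosineSeq D b c a η v)
    (hw : IsCosineSeq D b c a ζ w) :
    0 ≤ ∑ i ∈ range (D + 1), distValency b c i * (u i * v i * w i) := by
  classical
  obtain ⟨x, -⟩ := h.exists_diam
  have hcard : 0 < (Fintype.card V : ℝ) := by exact_mod_cast Fintype.card_pos_iff.mpr ⟨x⟩
  have hprod : (radialMatrix G fun i => u i * v i * w i).PosSemidef :=
    ((h.radialMatrix_posSemidef hu).hadamard (h.radialMatrix_posSemidef hv)).hadamard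
      (h.radialMatrix_posSemidef hw)
  refine nonneg_of_mul_nonneg_right ((hprod.dotProduct_mulVec_nonneg 1).trans_eq ?_) hcard
  simp [dotProduct, Matrix.mulVec, radialMatrix, h.sum_dist _ fun i => u i * v i * w i]

end IsDRG

theorem IsSmallestEig.posSemidef_sub [DecidableEq V] {G : SimpleGraph V} [DecidableRel G.Adj]
    {θ : ℝ} (hθ : IsSmallestEig G θ) : (G.adjMatrix ℝ - θ • 1).PosSemidef := by
  have hA : (G.adjMatrix ℝ - θ • 1).IsHermitian :=
    (SimpleGraph.isHermitian_adjMatrix ℝ G).sub (Matrix.isHermitian_one.smul (IsSelfAdjoint.all θ))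
  rw [hA.posSemidef_iff_eigenvalues_nonneg]
  intro i
  have heig := hA.mulVec_eigenvectorBasis i
  have hsmall := hθ.2 (hA.eigenvalues i + θ) ⟨hA.eigenvectorBasis i, fun h0 => ?_, ?_⟩
  · simpa using hsmall
  · exact hA.eigenvectorBasis.toBasis.ne_zero i (by ext j; simpa using congr_fun h0 j)
  · rw [Matrix.sub_mulVec, Matrix.smul_mulVec, Matrix.one_mulVec, sub_eq_iff_eq_add] at heig
    rw [heig, add_smul]

theorem IsSmallestEig.lt_of_dotProduct_mulVec_eq [DecidableEq V] {G : SimpleGraph V}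
    [DecidableRel G.Adj] {θ μ : ℝ} (hθ : IsSmallestEig G θ) {v : V → ℝ}
    (hquad : v ⬝ᵥ (G.adjMatrix ℝ *ᵥ v) = μ * (v ⬝ᵥ v)) (hne : G.adjMatrix ℝ *ᵥ v ≠ μ • v) :
    θ < μ := by
  have hpos : 0 < v ⬝ᵥ v := by
    refine Matrix.dotProduct_star_self_pos_iff.mpr ?_
    rintro rfl
    simp at hne
  have hform : v ⬝ᵥ ((G.adjMatrix ℝ - θ • 1) *ᵥ v) = (μ - θ) * (v ⬝ᵥ v) := by
    rw [Matrix.sub_mulVec, Matrix.smul_mulVec, Matrix.one_mulVec, dotProduct_sub, hquad,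
      dotProduct_smul, smul_eq_mul, sub_mul]
  have hle : θ ≤ μ := by
    have hnonneg : 0 ≤ (μ - θ) * (v ⬝ᵥ v) :=
      hform ▸ hθ.posSemidef_sub.dotProduct_mulVec_nonneg v
    exact sub_nonneg.mp (nonneg_of_mul_nonneg_left hnonneg hpos)
  refine hle.lt_of_ne fun heq => hne ?_
  have hker : (G.adjMatrix ℝ - θ • 1) *ᵥ v = 0 :=
    (hθ.posSemidef_sub.dotProduct_mulVec_zero_iff v).mp (by
      rw [star_trivial, hform, heq, sub_self, zero_mul])
  rwa [Matrix.sub_mulVec, Matrix.smul_mulVec, Matrix.one_mulVec, sub_eq_zero, heq] at hker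

namespace IsDRG

variable {G : SimpleGraph V} {D : ℕ} {b c a : ℕ → ℕ}

/-- The test vector `f (d(x, ·))` below is an eigenvector of the subgraph induced on `{x} ∪ Γ(x)`,
extended by zero. -/
theorem smallestEig_lt_of_sq_eq [DecidableEq V] [DecidableRel G.Adj] (h : IsDRG G D b c a)
    (hD : 2 ≤ D) {θ μ : ℝ} (hθ : IsSmallestEig G θ) (hμ : μ ^ 2 = a 1 * μ + b 0) :
    θ < μ := by
  obtain ⟨x, -, z, -, -, hz⟩ := h.exists_adj_dist_eq (i := 1) hD
  let f : ℕ → ℝ := fun i => if i = 0 then μ - a 1 else if i = 1 then 1 else 0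
  let v : V → ℝ := fun y => f (G.dist x y)
  have hAv : ∀ y, (G.adjMatrix ℝ *ᵥ v) y = intersectionOp b c a f (G.dist x y) :=
    congr_fun (h.adjMatrix_mulVec_dist x f)
  have hsupport : ∀ i, f i * intersectionOp b c a f i = μ * (f i * f i)
    | 0 => by
      simp only [f, intersectionOp, h.c_zero, h.a_zero, Nat.cast_zero, zero_mul, zero_add, mul_one,
        ↓reduceIte, one_ne_zero]
      linear_combination (a 1 - μ) * hμ
    | 1 => by simp [f, intersectionOp, h.c_one (by omega)]
    | i + 2 => by simp [f]
  refine hθ.lt_of_dotProduct_mulVec_eq (v := v) ?_ fun heig => ?_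
  · simp only [dotProduct, mul_sum, hAv]
    exact sum_congr rfl fun y _ => hsupport (G.dist x y)
  · have hc : (c 2 : ℝ) ≠ 0 := (h.c_pos hD).ne'
    have heigz : intersectionOp b c a f 2 = μ * f 2 := by
      have hvalue := hAv z
      rw [heig, hz] at hvalue
      rw [← hvalue]
      simp [v, hz]
    simp [f, intersectionOp, hc] at heigz

theorem b_diam (h : IsDRG G D b c a) : b D = 0 := by
  obtain ⟨x, y, hxy⟩ := h.exists_diam
  rw [← h.card_b D le_rfl x y hxy, Nat.card_eq_zero]
  refine .inl ⟨fun z => ?_⟩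
  have hz : G.dist x z = D + 1 := z.2.2
  have hle := h.le_diam x z
  omega

theorem cosineSeq_recurrence (h : IsDRG G 3 b c a) {θ : ℝ} {u : ℕ → ℝ}
    (hu : IsCosineSeq 3 b c a θ u) :
    b 0 * u 1 = θ ∧ 1 + a 1 * u 1 + b 1 * u 2 = θ * u 1 ∧
      c 2 * u 1 + a 2 * u 2 + b 2 * u 3 = θ * u 2 ∧ c 3 * u 2 + a 3 * u 3 = θ * u 3 := by
  have h₀ := hu.intersectionOp_eq 0 (by norm_num)
  have h₁ := hu.intersectionOp_eq 1 (by norm_num)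
  have h₂ := hu.intersectionOp_eq 2 (by norm_num)
  have h₃ := hu.intersectionOp_eq 3 le_rfl
  simp only [intersectionOp, h.c_zero, h.a_zero, hu.zero, Nat.cast_zero, zero_add, mul_one] at h₀
  simp only [intersectionOp, h.c_one (by norm_num), hu.zero, Nat.sub_self, Nat.cast_one,
    mul_one] at h₁
  simp only [intersectionOp, h.b_diam, Nat.cast_zero, zero_mul, add_zero] at h₃
  exact ⟨h₀, h₁, h₂, h₃⟩

theorem sub_a_three_mul_cosineSeq_three (h : IsDRG G 3 b c a) {θ : ℝ} {u : ℕ → ℝ}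
    (hu : IsCosineSeq 3 b c a θ u) :
    (θ - a 3) * (b 0 * b 1 * u 3) = c 3 * (θ ^ 2 - a 1 * θ - b 0) := by
  obtain ⟨h₀, h₁, -, h₃⟩ := h.cosineSeq_recurrence hu
  linear_combination -b 0 * b 1 * h₃ + b 0 * c 3 * h₁ + c 3 * (θ - a 1) * h₀

theorem cosineSeq_a_three_apply_two (h : IsDRG G 3 b c a) {u : ℕ → ℝ}
    (hu : IsCosineSeq 3 b c a (a 3) u) : u 2 = 0 := by
  obtain ⟨-, -, -, h₃⟩ := h.cosineSeq_recurrence hu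
  exact (mul_eq_zero.mp (add_eq_right.mp h₃)).resolve_left (h.c_pos (by norm_num)).ne'

theorem valency_eq_of_cosineSeq_a_three (h : IsDRG G 3 b c a) {u : ℕ → ℝ}
    (hu : IsCosineSeq 3 b c a (a 3) u) {β : ℝ} (hβ : (a 3 : ℝ) = a 1 + β) :
    (b 0 : ℝ) = a 3 * β := by
  obtain ⟨h₀, h₁, -, -⟩ := h.cosineSeq_recurrence hu
  rw [h.cosineSeq_a_three_apply_two hu] at h₁
  linear_combination b 0 * h₁ + (a 3 - a 1) * h₀ + a 3 * hβ

theorem mul_cosineSeq_a_three_apply_one (h : IsDRG G 3 b c a) {u : ℕ → ℝ}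
    (hu : IsCosineSeq 3 b c a (a 3) u) {β : ℝ} (hβ : (a 3 : ℝ) = a 1 + β) : β * u 1 = 1 := by
  obtain ⟨-, h₁, -, -⟩ := h.cosineSeq_recurrence hu
  rw [h.cosineSeq_a_three_apply_two hu] at h₁
  linear_combination -h₁ - u 1 * hβ

theorem mul_cosineSeq_a_three_apply_three (h : IsDRG G 3 b c a) {u : ℕ → ℝ}
    (hu : IsCosineSeq 3 b c a (a 3) u) {β : ℝ} (hβ : (a 3 : ℝ) = a 1 + β) :
    b 2 * β * u 3 = -c 2 := by
  obtain ⟨-, -, h₂, -⟩ := h.cosineSeq_recurrence hu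
  rw [h.cosineSeq_a_three_apply_two hu] at h₂
  linear_combination β * h₂ - c 2 * h.mul_cosineSeq_a_three_apply_one hu hβ

section Shilla

variable [DecidableEq V] [DecidableRel G.Adj]

theorem smallestEig_lt_of_isEig_a_three (h : IsDRG G 3 b c a) (ha : IsEig G (a 3)) {β θ : ℝ}
    (hβ : (a 3 : ℝ) = a 1 + β) (hθ : IsSmallestEig G θ) : θ < -β := by
  obtain ⟨u, hu⟩ := h.exists_isCosineSeq ha
  have hk : (b 0 : ℝ) = a 3 * β := h.valency_eq_of_cosineSeq_a_three hu hβ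
  exact h.smallestEig_lt_of_sq_eq (by norm_num) hθ (by linear_combination -hk - β * hβ)

theorem krein_bound_of_isEig_a_three (h : IsDRG G 3 b c a) (ha : IsEig G (a 3)) {β θ : ℝ}
    (hβ : (a 3 : ℝ) = a 1 + β) (hθ : IsEig G θ) (hne : θ ≠ a 3) :
    -β * (b 2 * β + c 2) ≤ (b 2 + c 2) * θ := by
  obtain ⟨u, hu⟩ := h.exists_isCosineSeq ha
  obtain ⟨w, hw⟩ := h.exists_isCosineSeq hθ
  obtain ⟨hw₀, -, -, -⟩ := h.cosineSeq_recurrence hw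
  have hb₀ : (0 : ℝ) < b 0 := h.b_pos (by norm_num)
  have hb₁ : (0 : ℝ) < b 1 := h.b_pos (by norm_num)
  have hb₂ : (0 : ℝ) < b 2 := h.b_pos (by norm_num)
  have hc₂ : (0 : ℝ) < c 2 := h.c_pos (by norm_num)
  have hc₃ : (0 : ℝ) < c 3 := h.c_pos (by norm_num)
  have hk : (b 0 : ℝ) = a 3 * β := h.valency_eq_of_cosineSeq_a_three hu hβ
  have hβ₀ : β ≠ 0 := right_ne_zero_of_mul (hk ▸ hb₀.ne')
  have hu1 : u 1 = 1 / β := eq_one_div_of_mul_eq_one_right (h.mul_cosineSeq_a_three_apply_one hu hβ)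
  have hu2 : u 2 = 0 := h.cosineSeq_a_three_apply_two hu
  have hu3 : u 3 = -c 2 / (b 2 * β) := eq_div_of_mul_eq (mul_ne_zero hb₂.ne' hβ₀) <| by
    rw [mul_comm, h.mul_cosineSeq_a_three_apply_three hu hβ]
  have hw1 : w 1 = θ / b 0 := eq_div_of_mul_eq hb₀.ne' (by rw [mul_comm, hw₀])
  have hw3 : w 3 = c 3 * (θ + β) / (b 0 * b 1) := by
    rw [eq_div_iff (by positivity)]
    apply mul_left_cancel₀ (sub_ne_zero.mpr hne)
    linear_combination h.sub_a_three_mul_cosineSeq_three hw + c 3 * θ * hβ - c 3 * hk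
  have hkrein := h.krein_nonneg hu hu hw
  simp only [sum_range_succ, sum_range_zero, distValency, prod_range_succ, prod_range_zero, hu.zero,
    hw.zero, hu1, hu2, hu3, hw1, hw3, h.c_one (by norm_num), Nat.cast_one] at hkrein
  have hvalue : 0 ≤ (β * (b 2 * β + c 2) + (b 2 + c 2) * θ) / (b 2 * β ^ 2) := by
    refine hkrein.trans_eq ?_
    field_simp
    ring
  rw [le_div_iff₀ (by positivity), zero_mul] at hvalue
  linarith

end Shilla

end IsDRG

end
/-- For a Shilla distance-regular graph with `b = b(Γ)`, the smallest eigenvalue `θ₃`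
satisfies `-b² < θ₃ < -b`. -/
theorem stmt15 {V : Type*} [Fintype V] [DecidableEq V] (G : SimpleGraph V)
    [DecidableRel G.Adj] (b c a : ℕ → ℕ) (hG : IsShilla G b c a)
    (β : ℕ) (hβ : a 3 = a 1 + β)
    (θ3 : ℝ) (h3 : IsSmallestEig G θ3) :
    -(β : ℝ) ^ 2 < θ3 ∧ θ3 < -(β : ℝ) := by
  have h := hG.drg
  have ha : IsEig G (a 3) := hG.second.1
  have hβ' : (a 3 : ℝ) = a 1 + β := by exact_mod_cast hβ
  have hupper : θ3 < -β := h.smallestEig_lt_of_isEig_a_three ha hβ' h3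
  have hne : θ3 ≠ a 3 :=
    (hupper.trans_le ((neg_nonpos.mpr β.cast_nonneg).trans (a 3).cast_nonneg)).ne
  have hkrein : -β * (b 2 * β + c 2) ≤ (b 2 + c 2) * θ3 :=
    h.krein_bound_of_isEig_a_three ha hβ' h3.1 hne
  have hlower : 0 < b 2 * (θ3 + β ^ 2) := by
    have hc₂ : (0 : ℝ) < c 2 := h.c_pos (by norm_num)
    linarith [mul_lt_mul_of_pos_left hupper hc₂]
  have hb₂ : (0 : ℝ) < b 2 := h.b_pos (by norm_num)
  exact ⟨neg_lt_iff_pos_add.mpr (pos_of_mul_pos_right hlower hb₂.le), hupper⟩
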